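/- Let (E, τ) be a violator space: E is a finite set and τ : 2^E → 2^E satisfies C1 (X ⊆ τ(X) for all X ⊆ E) and C22 (F ⊆ G ⊆ τ(F) implies τ(G) = τ(F)). Then (E, τ) is uniquely generated if and only if for every X ⊆ E, τ(X) = τ(ex(X)), where ex(X) is the set of extreme points of X. -/

import Mathlib

/-- `B` is a basis of `X` w.r.t. `τ`: a generator of `X` minimal under inclusion. -/
def IsBasis {α : Type*} (τ : Finset α → Finset α) (X B : Finset α) : Prop :=
  τ B = τ X ∧ ∀ B' : Finset α, τ B' = τ X → B' ⊆ B → B' = B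

/-- The set of extreme points of `X`: elements x ∈ X with x ∉ τ(X \ {x}). -/
def extremePoints {α : Type*} [DecidableEq α] (τ : Finset α → Finset α)
    (X : Finset α) : Finset α :=
  X.filter (fun x => x ∉ τ (X.erase x))

/-!
The extreme points of `X` are the elements common to all generators of `X` contained in `X`.
A unique basis lies in every generator, so it lies in `ex(X)`, and C22 gives `τ(ex(X)) = τ(X)`.
Conversely, two bases `B` and `C` of `X` are both bases of `B ∪ C`; as `ex(B ∪ C)` generates
`B ∪ C` and lies in both, minimality forces `B = ex(B ∪ C) = C`.
-/

/-- The axioms C1 and C22 of a violator space on the operator `τ`. The sets in question are the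
finite subsets of an arbitrary ground type `α`. -/
structure IsViolatorOperator {α : Type*} (τ : Finset α → Finset α) : Prop where
  subset_apply (X : Finset α) : X ⊆ τ X
  apply_eq_of_subset_of_subset_apply {F G : Finset α} (hFG : F ⊆ G) (hG : G ⊆ τ F) : τ G = τ F

section Basis

variable {α : Type*} {τ : Finset α → Finset α} {X Y B : Finset α}

theorem isBasis_iff_minimal : IsBasis τ X B ↔ Minimal (fun Y ↦ τ Y = τ X) B := by
  simp only [IsBasis, minimal_iff, eq_comm]

theorem exists_isBasis_subset (hY : τ Y = τ X) : ∃ B ⊆ Y, IsBasis τ X B := by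
  simpa only [isBasis_iff_minimal] using
    exists_minimal_le_of_wellFoundedLT (fun Z ↦ τ Z = τ X) Y hY

theorem IsBasis.congr (hB : IsBasis τ X B) (hXY : τ X = τ Y) : IsBasis τ Y B := by
  rwa [IsBasis, ← hXY]

theorem subset_of_forall_isBasis_eq (hB : ∀ C, IsBasis τ X C → C = B) (hY : τ Y = τ X) :
    B ⊆ Y := by
  obtain ⟨C, hCY, hC⟩ := exists_isBasis_subset hY
  exact hB C hC ▸ hCY

end Basis

namespace IsViolatorOperator

variable {α : Type*} {τ : Finset α → Finset α} {X Y B : Finset α} {x : α}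

theorem apply_eq_of_subset_of_subset (hτ : IsViolatorOperator τ) (hBY : B ⊆ Y) (hYX : Y ⊆ X)
    (hB : τ B = τ X) : τ Y = τ X :=
  (hτ.apply_eq_of_subset_of_subset_apply hBY (hB ▸ hYX.trans (hτ.subset_apply X))).trans hB

variable [DecidableEq α]

theorem apply_union_eq (hτ : IsViolatorOperator τ) (hXY : τ X = τ Y) : τ (X ∪ Y) = τ X :=
  hτ.apply_eq_of_subset_of_subset_apply Finset.subset_union_left <|
    Finset.union_subset (hτ.subset_apply X) (hXY ▸ hτ.subset_apply Y)

theorem apply_erase_eq_iff (hτ : IsViolatorOperator τ) (hx : x ∈ X) :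
    τ (X.erase x) = τ X ↔ x ∈ τ (X.erase x) := by
  refine ⟨fun h ↦ h ▸ hτ.subset_apply X hx, fun hxτ ↦ ?_⟩
  have hX : X ⊆ τ (X.erase x) := calc
    X = insert x (X.erase x) := (Finset.insert_erase hx).symm
    _ ⊆ τ (X.erase x) := Finset.insert_subset hxτ (hτ.subset_apply _)
  exact (hτ.apply_eq_of_subset_of_subset_apply (Finset.erase_subset x X) hX).symm

theorem mem_extremePoints_iff (hτ : IsViolatorOperator τ) :
    x ∈ extremePoints τ X ↔ ∀ Y ⊆ X, τ Y = τ X → x ∈ Y := by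
  rw [extremePoints, Finset.mem_filter]
  constructor
  · rintro ⟨hxX, hx⟩ Y hYX hY
    by_contra hxY
    have hYe : Y ⊆ X.erase x := Finset.subset_erase.2 ⟨hYX, hxY⟩
    exact hx <| (hτ.apply_erase_eq_iff hxX).1 <|
      hτ.apply_eq_of_subset_of_subset hYe (Finset.erase_subset x X) hY
  · intro h
    have hxX : x ∈ X := h X subset_rfl rfl
    exact ⟨hxX, fun hx ↦ Finset.notMem_erase x X <|
      h _ (Finset.erase_subset x X) ((hτ.apply_erase_eq_iff hxX).2 hx)⟩

theorem apply_extremePoints_eq (hτ : IsViolatorOperator τ) (hX : ∃! B, IsBasis τ X B) :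
    τ (extremePoints τ X) = τ X := by
  obtain ⟨B, hB, hB_unique⟩ := hX
  have hB_ex : B ⊆ extremePoints τ X := fun x hx ↦
    hτ.mem_extremePoints_iff.2 fun Y _ hY ↦ subset_of_forall_isBasis_eq hB_unique hY hx
  have hex_X : extremePoints τ X ⊆ X := Finset.filter_subset _ X
  exact hτ.apply_eq_of_subset_of_subset hB_ex hex_X hB.1

theorem extremePoints_eq_of_isBasis (hτ : IsViolatorOperator τ)
    (hX : τ (extremePoints τ X) = τ X) (hB : IsBasis τ X B) (hBX : B ⊆ X) :
    extremePoints τ X = B :=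
  hB.2 _ hX fun _ hx ↦ hτ.mem_extremePoints_iff.1 hx B hBX hB.1

theorem isBasis_unique (hτ : IsViolatorOperator τ) {C : Finset α}
    (hex : τ (extremePoints τ (B ∪ C)) = τ (B ∪ C))
    (hB : IsBasis τ X B) (hC : IsBasis τ X C) : B = C := by
  have hBC : τ (B ∪ C) = τ X := (hτ.apply_union_eq (hB.1.trans hC.1.symm)).trans hB.1
  have hex_eq {D : Finset α} (hD : IsBasis τ X D) (hDBC : D ⊆ B ∪ C) :
      extremePoints τ (B ∪ C) = D :=
    hτ.extremePoints_eq_of_isBasis hex (hD.congr hBC.symm) hDBC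
  exact (hex_eq hB Finset.subset_union_left).symm.trans (hex_eq hC Finset.subset_union_right)

end IsViolatorOperator

theorem violator_uniquelyGenerated_iff_kreinMilman_general {α : Type*} [DecidableEq α]
    {τ : Finset α → Finset α} (hτ : IsViolatorOperator τ) :
    (∀ X : Finset α, ∃! B : Finset α, IsBasis τ X B) ↔
    (∀ X : Finset α, τ X = τ (extremePoints τ X)) := by
  refine ⟨fun h X ↦ (hτ.apply_extremePoints_eq (h X)).symm, fun hex X ↦ ?_⟩
  obtain ⟨B, -, hB⟩ := exists_isBasis_subset (rfl : τ X = τ X)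
  exact ⟨B, hB, fun C hC ↦ hτ.isBasis_unique (hex _).symm hC hB⟩

/-- A violator space (C1 + C22) is uniquely generated iff
τ(X) = τ(ex(X)) for every X (Krein–Milman property). -/
theorem violator_uniquelyGenerated_iff_kreinMilman {α : Type*} [Fintype α] [DecidableEq α]
    (τ : Finset α → Finset α)
    (hC1 : ∀ X : Finset α, X ⊆ τ X)
    (hC22 : ∀ F G : Finset α, F ⊆ G → G ⊆ τ F → τ G = τ F) :
    (∀ X : Finset α, ∃! B : Finset α, IsBasis τ X B) ↔
    (∀ X : Finset α, τ X = τ (extremePoints τ X)) :=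
  violator_uniquelyGenerated_iff_kreinMilman_general ⟨hC1, hC22 _ _⟩
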